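/- Let k be a commutative ring with unity, N ≥ 2 an integer, and q ∈ k a primitive N-th root of unity. Let U = (U^i)_{i∈ℤ} and V = (V^i)_{i∈ℤ} be ℤ-graded k-modules equipped with degree-1 k-linear maps d_U : U^i → U^{i+1} and d_V : V^i → V^{i+1}. Let U⊗^{•q}V be the graded k-module with (U⊗^{•q}V)^n = ⊕_{r+s=n} U^r ⊗_k V^s and degree-1 differential d determined on pure tensors by d(u⊗v) = d_U(u)⊗v + q^r·u⊗d_V(v) for u ∈ U^r. Then for every integer n with 1 ≤ n ≤ N, every s ∈ ℤ, every u ∈ U^s and every homogeneous v ∈ V: d^{(n)}(u⊗v) = Σ_{l=0}^{n} q^{ls} · [n choose l] · d_U^{(n−l)}(u) ⊗ d_V^{(l)}(v), where d^{(i)} denotes the i-fold iterate of the corresponding differential (and d^{(0)} = id). -/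

import Mathlib

open scoped TensorProduct DirectSum

/-- The `q`-integer `[m] = 1 + q + ⋯ + q^{m-1}`. -/
def qInt {k : Type*} [CommRing k] (q : k) (m : ℕ) : k := ∑ i ∈ Finset.range m, q ^ i

/-- The `q`-factorial `[m]! = [m][m-1]⋯[1]`, with `[0]! = 1`. -/
def qFact {k : Type*} [CommRing k] (q : k) (m : ℕ) : k := ∏ i ∈ Finset.range m, qInt q (i + 1)

/-- `QBinomSpec q N m l c` says that `c` is *the* `q`-binomial coefficient `[m choose l]`
(for `0 ≤ l ≤ m ≤ N`): in the special cases `(l,m) = (0,N), (N,N)` it is `1` by convention,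
and otherwise it is characterized by `[l]! ⬝ [m-l]! ⬝ c = [m]!`. -/
def QBinomSpec {k : Type*} [CommRing k] (q : k) (N m l : ℕ) (c : k) : Prop :=
  ((m = N ∧ (l = 0 ∨ l = N)) → c = 1) ∧
  (¬(m = N ∧ (l = 0 ∨ l = N)) → qFact q l * qFact q (m - l) * c = qFact q m)

/-- Transport a graded component along an equality of degrees. -/
def castLM {k : Type*} [CommRing k] {X : ℤ → Type*} [∀ i, AddCommGroup (X i)]
    [∀ i, Module k (X i)] {i j : ℤ} (h : i = j) : X i →ₗ[k] X j := by
  subst h; exact LinearMap.id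

/-- The `l`-fold iterate `d^{(l),i} : X^i → X^{i+l}` of a degree-1 family of maps. -/
def dpow {k : Type*} [CommRing k] {X : ℤ → Type*} [∀ i, AddCommGroup (X i)]
    [∀ i, Module k (X i)] (d : ∀ i : ℤ, X i →ₗ[k] X (i + 1)) :
    (l : ℕ) → (i : ℤ) → (X i →ₗ[k] X (i + l))
  | 0, i => castLM (by simp)
  | l + 1, i => castLM (by push_cast; ring) ∘ₗ (dpow d l (i + 1)) ∘ₗ d i

/-- The differential of the twisted tensor product `U ⊗^{•q} V` on the bigraded
direct sum `⨁_{(r,s)} U^r ⊗ V^s`, given on the `(r,s)` component by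
`u⊗v ↦ d_U(u)⊗v + q^r ⬝ u⊗d_V(v)` (here `q = ↑u` is a unit, so `q^r` makes sense). -/
noncomputable def tensorDiff {k : Type*} [CommRing k] (u : kˣ)
    (U V : ℤ → Type*) [∀ i, AddCommGroup (U i)] [∀ i, Module k (U i)]
    [∀ i, AddCommGroup (V i)] [∀ i, Module k (V i)]
    (dU : ∀ i : ℤ, U i →ₗ[k] U (i + 1)) (dV : ∀ i : ℤ, V i →ₗ[k] V (i + 1)) :
    (⨁ p : ℤ × ℤ, U p.1 ⊗[k] V p.2) →ₗ[k] (⨁ p : ℤ × ℤ, U p.1 ⊗[k] V p.2) :=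
  DirectSum.toModule k (ℤ × ℤ) _ (fun p =>
    ((DirectSum.lof k (ℤ × ℤ) (fun p : ℤ × ℤ => U p.1 ⊗[k] V p.2) (p.1 + 1, p.2)) ∘ₗ
      (TensorProduct.map (dU p.1) LinearMap.id))
    + ((u ^ p.1 : kˣ) : k) •
      ((DirectSum.lof k (ℤ × ℤ) (fun p : ℤ × ℤ => U p.1 ⊗[k] V p.2) (p.1, p.2 + 1)) ∘ₗ
        (TensorProduct.map LinearMap.id (dV p.2))))

/-- Recursively defined Gaussian binomial. -/
def qb {k : Type*} [CommRing k] (q : k) : ℕ → ℕ → k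
  | _, 0 => 1
  | 0, _ + 1 => 0
  | n + 1, l + 1 => q ^ (l + 1) * qb q n (l + 1) + qb q n l

theorem qb_zero_right {k : Type*} [CommRing k] (q : k) (n : ℕ) : qb q n 0 = 1 := by
  cases n <;> simp [qb]

theorem qb_of_lt {k : Type*} [CommRing k] (q : k) (n : ℕ) : ∀ l, n < l → qb q n l = 0 := by
  induction n with
  | zero => intro l hl; cases l with
    | zero => omega
    | succ l => simp [qb]
  | succ n ih => intro l hl; cases l with
    | zero => omega
    | succ l => simp [qb, ih (l + 1) (by omega), ih l (by omega)]

theorem qb_self {k : Type*} [CommRing k] (q : k) (n : ℕ) : qb q n n = 1 := by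
  induction n with
  | zero => simp [qb]
  | succ n ih => simp [qb, ih, qb_of_lt q n (n + 1) (by omega)]

theorem qFact_succ {k : Type*} [CommRing k] (q : k) (n : ℕ) :
    qFact q (n + 1) = qFact q n * qInt q (n + 1) := by
  simp [qFact, Finset.prod_range_succ]

theorem qInt_add {k : Type*} [CommRing k] (q : k) (a b : ℕ) :
    qInt q (a + b) = qInt q a + q ^ a * qInt q b := by
  simp [qInt, Finset.sum_range_add, pow_add, Finset.mul_sum]

theorem qb_fact {k : Type*} [CommRing k] (q : k) (n : ℕ) : ∀ l m, l + m = n →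
    qFact q l * qFact q m * qb q n l = qFact q n := by
  induction n with
  | zero => intro l m h
            obtain ⟨rfl, rfl⟩ : l = 0 ∧ m = 0 := by omega
            simp [qb, qFact]
  | succ n ih =>
    intro l m h
    cases l with
    | zero =>
      obtain rfl : m = n + 1 := by omega
      simp [qb, qFact]
    | succ l =>
      cases m with
      | zero =>
        obtain rfl : l = n := by omega
        rw [qb_self]; simp [qFact]
      | succ m =>
        have h1 := ih (l + 1) m (by omega)
        have h2 := ih l (m + 1) (by omega)
        have h3 : qInt q (n + 1) = qInt q (l + 1) + q ^ (l + 1) * qInt q (m + 1) := by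
          rw [← qInt_add]; congr 1; omega
        rw [qFact_succ q n, h3]
        simp only [qb]
        rw [qFact_succ] at h1 h2 ⊢
        rw [qFact_succ q m] at *
        linear_combination q ^ (l + 1) * qInt q (m + 1) * h1 + qInt q (l + 1) * h2

theorem qFact_nzd {k : Type*} [CommRing k] (N : ℕ) (q : k)
    (hq2 : ∀ l : ℕ, 1 ≤ l → l ≤ N - 1 → q ^ l - 1 ∈ nonZeroDivisors k) (m : ℕ)
    (hm : m ≤ N - 1) : qFact q m ∈ nonZeroDivisors k := by
  refine prod_mem fun i hi => ?_
  have hi' := Finset.mem_range.1 hi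
  have h := hq2 (i + 1) (by omega) (by omega)
  rw [← geom_sum_mul] at h
  exact (mul_mem_nonZeroDivisors.1 h).1

theorem qb_unique {k : Type*} [CommRing k] (N : ℕ) (q : k)
    (hq2 : ∀ l : ℕ, 1 ≤ l → l ≤ N - 1 → q ^ l - 1 ∈ nonZeroDivisors k)
    (n : ℕ) (hnN : n ≤ N) (l : ℕ) (hl : l ≤ n) (c : k) (hc : QBinomSpec q N n l c) :
    c = qb q n l := by
  by_cases h : n = N ∧ (l = 0 ∨ l = N)
  · rw [hc.1 h]
    obtain ⟨rfl, rfl | rfl⟩ := h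
    · rw [qb_zero_right]
    · rw [qb_self]
  · have h1 := hc.2 h
    rw [← qb_fact q n l (n - l) (by omega)] at h1
    by_cases h0 : l = 0 ∨ l = n
    · have hn : n ≤ N - 1 := by omega
      exact (mul_cancel_left_mem_nonZeroDivisors (mul_mem
        (qFact_nzd N q hq2 l (by omega)) (qFact_nzd N q hq2 (n - l) (by omega)))).1 h1
    · exact (mul_cancel_left_mem_nonZeroDivisors (mul_mem
        (qFact_nzd N q hq2 l (by omega)) (qFact_nzd N q hq2 (n - l) (by omega)))).1 h1

section
variable {k : Type*} [CommRing k]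
    (U V : ℤ → Type*) [∀ i, AddCommGroup (U i)] [∀ i, Module k (U i)]
    [∀ i, AddCommGroup (V i)] [∀ i, Module k (V i)]
    (dU : ∀ i : ℤ, U i →ₗ[k] U (i + 1)) (dV : ∀ i : ℤ, V i →ₗ[k] V (i + 1))

theorem lof_cast {i i' j j' : ℤ} (h : i = i') (h' : j = j') (x : U i) (y : V j) :
    DirectSum.lof k (ℤ × ℤ) (fun p : ℤ × ℤ => U p.1 ⊗[k] V p.2) (i', j')
      ((castLM (k := k) h x) ⊗ₜ[k] (castLM (k := k) h' y)) =
    DirectSum.lof k (ℤ × ℤ) (fun p : ℤ × ℤ => U p.1 ⊗[k] V p.2) (i, j) (x ⊗ₜ[k] y) := by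
  subst h; subst h'; rfl

/-- The term of bidegree `(m, l)`. -/
noncomputable def TT (s t : ℤ) (x : U s) (y : V t) (m l : ℕ) :
    ⨁ p : ℤ × ℤ, U p.1 ⊗[k] V p.2 :=
  DirectSum.lof k (ℤ × ℤ) (fun p : ℤ × ℤ => U p.1 ⊗[k] V p.2) (s + (m : ℤ), t + (l : ℤ))
    ((dpow dU m s x) ⊗ₜ[k] (dpow dV l t y))

theorem TT_left (s t : ℤ) (x : U s) (y : V t) (m l : ℕ) :
    TT U V dU dV (s + 1) t (dU s x) y m l = TT U V dU dV s t x y (m + 1) l := by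
  exact (lof_cast U V (by push_cast; ring) rfl (dpow dU m (s + 1) (dU s x)) (dpow dV l t y)).symm

theorem TT_right (s t : ℤ) (x : U s) (y : V t) (m l : ℕ) :
    TT U V dU dV s (t + 1) x (dV t y) m l = TT U V dU dV s t x y m (l + 1) := by
  exact (lof_cast U V rfl (by push_cast; ring) (dpow dU m s x) (dpow dV l (t + 1) (dV t y))).symm

theorem TT_zero (s t : ℤ) (x : U s) (y : V t) :
    TT U V dU dV s t x y 0 0 =
    DirectSum.lof k (ℤ × ℤ) (fun p : ℤ × ℤ => U p.1 ⊗[k] V p.2) (s, t) (x ⊗ₜ[k] y) :=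
  lof_cast U V (by simp) (by simp) x y

theorem tensorDiff_lof (u : kˣ) (s t : ℤ) (x : U s) (y : V t) :
    tensorDiff u U V dU dV
      (DirectSum.lof k (ℤ × ℤ) (fun p : ℤ × ℤ => U p.1 ⊗[k] V p.2) (s, t) (x ⊗ₜ[k] y)) =
    DirectSum.lof k (ℤ × ℤ) (fun p : ℤ × ℤ => U p.1 ⊗[k] V p.2) (s + 1, t) (dU s x ⊗ₜ[k] y)
    + ((u ^ s : kˣ) : k) •
    DirectSum.lof k (ℤ × ℤ) (fun p : ℤ × ℤ => U p.1 ⊗[k] V p.2) (s, t + 1) (x ⊗ₜ[k] dV t y) := by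
  unfold tensorDiff
  rw [DirectSum.toModule_lof]
  rfl

theorem main_aux (u : kˣ) (n : ℕ) : ∀ (s t : ℤ) (x : U s) (y : V t),
    ((tensorDiff u U V dU dV) ^ n)
        (DirectSum.lof k (ℤ × ℤ) (fun p : ℤ × ℤ => U p.1 ⊗[k] V p.2) (s, t) (x ⊗ₜ[k] y)) =
      ∑ l ∈ Finset.range (n + 1),
        (((u ^ ((l : ℤ) * s) : kˣ) : k) * qb (u : k) n l) • TT U V dU dV s t x y (n - l) l := by
  induction n with
  | zero => intro s t x y; simp [TT_zero, qb]
  | succ n ih =>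
    intro s t x y
    rw [pow_succ, Module.End.mul_apply, tensorDiff_lof, map_add, map_smul, ih, ih]
    simp only [TT_left, TT_right]
    have hA : ∑ l ∈ Finset.range (n + 1), (((u ^ ((l : ℤ) * (s + 1)) : kˣ) : k) * qb (u : k) n l) •
          TT U V dU dV s t x y (n - l + 1) l =
        ∑ l ∈ Finset.range (n + 2), (((u ^ ((l : ℤ) * (s + 1)) : kˣ) : k) * qb (u : k) n l) •
          TT U V dU dV s t x y (n + 1 - l) l := by
      rw [Finset.sum_range_succ _ (n + 1), qb_of_lt _ n (n + 1) (by omega)]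
      simp only [mul_zero, zero_smul, add_zero]
      refine Finset.sum_congr rfl fun l hl => ?_
      have := Finset.mem_range.1 hl
      rw [show n + 1 - l = n - l + 1 by omega]
    rw [hA, Finset.sum_range_succ', Finset.sum_range_succ' _ (n + 1), Finset.smul_sum,
      add_right_comm, ← Finset.sum_add_distrib]
    congr 1
    · refine Finset.sum_congr rfl fun l hl => ?_
      rw [Nat.add_sub_add_right, smul_smul, ← add_smul]
      congr 1
      simp only [qb]
      have e1 : (u ^ (((l + 1 : ℕ) : ℤ) * (s + 1)) : kˣ) =
          u ^ (((l + 1 : ℕ) : ℤ) * s) * u ^ (l + 1) := by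
        rw [mul_add, zpow_add, mul_one, zpow_natCast]
      have e2 : (u ^ (((l + 1 : ℕ) : ℤ) * s) : kˣ) = u ^ s * u ^ ((l : ℤ) * s) := by
        rw [← zpow_add]; congr 1; push_cast; ring
      rw [e1, e2]
      push_cast
      ring
    · simp [qb_zero_right]

end

/-- for `u ∈ U^s`, `v ∈ V^t` and `1 ≤ n ≤ N`, the `n`-fold iterate of the
differential of `U ⊗^{•q} V` satisfies
`d^{(n)}(u⊗v) = Σ_{l=0}^{n} q^{ls} ⬝ [n choose l] ⬝ d_U^{(n−l)}(u) ⊗ d_V^{(l)}(v)`. -/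
theorem tensorDiff_iterate_tmul
    {k : Type*} [CommRing k] (N : ℕ) (hN : 2 ≤ N) (q : k)
    (hq1 : q ^ N = 1)
    (hq2 : ∀ l : ℕ, 1 ≤ l → l ≤ N - 1 → q ^ l - 1 ∈ nonZeroDivisors k)
    (u : kˣ) (hu : (u : k) = q)
    (U V : ℤ → Type*) [∀ i, AddCommGroup (U i)] [∀ i, Module k (U i)]
    [∀ i, AddCommGroup (V i)] [∀ i, Module k (V i)]
    (dU : ∀ i : ℤ, U i →ₗ[k] U (i + 1)) (dV : ∀ i : ℤ, V i →ₗ[k] V (i + 1))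
    (n : ℕ) (hn1 : 1 ≤ n) (hnN : n ≤ N)
    (c : ℕ → k) (hc : ∀ l ≤ n, QBinomSpec q N n l (c l))
    (s t : ℤ) (x : U s) (y : V t) :
    ((tensorDiff u U V dU dV) ^ n)
        (DirectSum.lof k (ℤ × ℤ) (fun p : ℤ × ℤ => U p.1 ⊗[k] V p.2) (s, t) (x ⊗ₜ[k] y)) =
      ∑ l ∈ Finset.range (n + 1),
        (((u ^ ((l : ℤ) * s) : kˣ) : k) * c l) •
          DirectSum.lof k (ℤ × ℤ) (fun p : ℤ × ℤ => U p.1 ⊗[k] V p.2)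
            (s + ((n - l : ℕ) : ℤ), t + (l : ℤ))
            ((dpow dU (n - l) s x) ⊗ₜ[k] (dpow dV l t y)) := by
  subst hu
  rw [main_aux]
  refine Finset.sum_congr rfl fun l hl => ?_
  have hl' : l ≤ n := by have := Finset.mem_range.1 hl; omega
  rw [qb_unique N _ hq2 n hnN l hl' (c l) (hc l hl')]
  rfl
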